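/- Quasi-shuffle product formula for cyclotomic S-sums: let k, l ≥ 1, let a_1,…,a_k, c_1,…,c_k, d_1,…,d_l, f_1,…,f_l be positive integers, b_1,…,b_k, e_1,…,e_l nonnegative integers, x_1,…,x_k, y_1,…,y_l nonzero reals, and n ∈ ℕ. Set P = S_{(a_1,b_1,c_1),…,(a_k,b_k,c_k)}(x_1,…,x_k; n) · S_{(d_1,e_1,f_1),…,(d_l,e_l,f_l)}(y_1,…,y_l; n), Σ₁ = Σ_{i=1}^n (x_1^i/(a_1 i+b_1)^{c_1}) · S_{(a_2,b_2,c_2),…,(a_k,b_k,c_k)}(x_2,…,x_k; i) · S_{(d_1,e_1,f_1),…,(d_l,e_l,f_l)}(y_1,…,y_l; i), and Σ₂ = Σ_{i=1}^n (y_1^i/(d_1 i+e_1)^{f_1}) · S_{(a_1,b_1,c_1),…,(a_k,b_k,c_k)}(x_1,…,x_k; i) · S_{(d_2,e_2,f_2),…,(d_l,e_l,f_l)}(y_2,…,y_l; i). (1) If a_1 e_1 = d_1 b_1, then P = Σ₁ + Σ₂ − (a_1/d_1)^{f_1} · Σ_{i=1}^n ((x_1 y_1)^i/(a_1 i+b_1)^{c_1+f_1})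 · S_{(a_2,b_2,c_2),…,(a_k,b_k,c_k)}(x_2,…,x_k; i) · S_{(d_2,e_2,f_2),…,(d_l,e_l,f_l)}(y_2,…,y_l; i). (2) If a_1 e_1 ≠ d_1 b_1, then P = Σ₁ + Σ₂ − Σ_{i=1}^n (x_1 y_1)^i · K(i) · S_{(a_2,b_2,c_2),…,(a_k,b_k,c_k)}(x_2,…,x_k; i) · S_{(d_2,e_2,f_2),…,(d_l,e_l,f_l)}(y_2,…,y_l; i), where K(i) = (−1)^{c_1} Σ_{j=1}^{c_1} (−1)^j · binom(c_1+f_1−j−1, f_1−1) · a_1^{f_1} d_1^{c_1−j} · (a_1 e_1 − d_1 b_1)^{−(c_1+f_1−j)} · (a_1 i + b_1)^{−j} + (−1)^{f_1} Σ_{j=1}^{f_1} (−1)^j · binom(c_1+f_1−j−1, c_1−1) · a_1^{f_1−j} d_1^{c_1} · (d_1 b_1 − a_1 e_1)^{−(c_1+f_1−j)} · (d_1 i + e_1)^{−j}. -/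

import Mathlib

/-- Cyclotomic S-sums: `cycS [((a₁,b₁,c₁),x₁),…] n` is
`S_{(a₁,b₁,c₁),…}(x₁,…; n)`. The empty sum equals `1`. -/
noncomputable def cycS : List ((ℕ × ℤ × ℕ) × ℝ) → ℕ → ℝ
  | [], _ => 1
  | ((a, b, c), x) :: t, n =>
      ∑ i ∈ Finset.Icc 1 n, x ^ i / ((a : ℝ) * i + (b : ℝ)) ^ c * cycS t i

/-!
Splitting the square `[1, n]²` along its diagonal turns the product of two sums into two nested
sums minus a diagonal sum, whose terms contain `1 / (u ^ c * v ^ f)` with `u = a i + b` and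
`v = d i + e`. These satisfy `a v - d u = Δ`, where `Δ = a e - d b` does not depend on `i`.
If `Δ = 0`, then `v` is proportional to `u`. Otherwise `p = 1 / u` and `q = 1 / v` satisfy
`p q = (a / Δ) p - (d / Δ) q`, and repeated use of this relation separates `p ^ c * q ^ f` into
powers of `p` and powers of `q`, with coefficients determined by Pascal's rule.
-/

open Finset

section PartialFractions

/-- The polynomial in `p` in the separation of `p ^ c * q ^ f` under the relation
`p * q = α * p - β * q`. With `p = 1 / u` it is the principal part of a partial fraction
decomposition at the pole `u = 0`; the summation index is `m = c - j`, where `j` is the order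
of the pole. -/
def principalPart {R : Type*} [CommRing R] (α β p : R) (c f : ℕ) : R :=
  ∑ m ∈ range c, (-1) ^ m * (Nat.multichoose f m : R) * α ^ f * β ^ m * p ^ (c - m)

variable {R : Type*} [CommRing R]

lemma principalPart_zero_left (α β p : R) (f : ℕ) : principalPart α β p 0 f = 0 :=
  sum_range_zero _

lemma principalPart_succ_zero (α β p : R) (c : ℕ) :
    principalPart α β p (c + 1) 0 = p ^ (c + 1) := by
  simp [principalPart, sum_range_succ']

lemma principalPart_succ_succ (α β p : R) (c f : ℕ) :
    principalPart α β p (c + 1) (f + 1) =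
      α * principalPart α β p (c + 1) f - β * principalPart α β p c (f + 1) := by
  simp only [principalPart, sum_range_succ' _ c, Nat.multichoose_succ_succ, Nat.add_sub_add_right,
    Nat.multichoose_zero_right]
  rw [mul_add, add_sub_right_comm, mul_sum, mul_sum, ← sum_sub_distrib]
  congr 1
  · refine sum_congr rfl fun m _ => ?_
    push_cast
    ring
  · ring

theorem pow_mul_pow_eq_principalPart_add {α β p q : R} (hpq : p * q = α * p - β * q) :
    ∀ {c f : ℕ}, 0 < c + f →
      p ^ c * q ^ f = principalPart α β p c f + principalPart (-β) (-α) q f c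
  | 0, f + 1, _ => by simp [principalPart_zero_left, principalPart_succ_zero]
  | c + 1, 0, _ => by simp [principalPart_zero_left, principalPart_succ_zero]
  | c + 1, f + 1, _ => by
    have reduce_f := pow_mul_pow_eq_principalPart_add hpq (c := c + 1) (f := f) (by lia)
    have reduce_c := pow_mul_pow_eq_principalPart_add hpq (c := c) (f := f + 1) (by lia)
    calc p ^ (c + 1) * q ^ (f + 1)
        = p ^ c * q ^ f * (p * q) := by ring
      _ = α * (p ^ (c + 1) * q ^ f) - β * (p ^ c * q ^ (f + 1)) := by rw [hpq]; ring
      _ = _ := by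
        rw [reduce_f, reduce_c, principalPart_succ_succ, principalPart_succ_succ]
        ring

lemma choose_sub_one_eq_multichoose {f : ℕ} (hf : 0 < f) (m : ℕ) :
    (f + m - 1).choose (f - 1) = Nat.multichoose f m := by
  rw [Nat.multichoose_eq]
  exact Nat.choose_symm_of_eq_add (by lia)

variable {K : Type*} [Field K]

lemma principalPart_div_inv (a d Δ u : K) (c : ℕ) {f : ℕ} (hf : 0 < f) :
    principalPart (a / Δ) (d / Δ) u⁻¹ c f =
      (-1) ^ c * ∑ j ∈ Icc 1 c, (-1) ^ j * ((c + f - j - 1).choose (f - 1) : K) *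
        a ^ f * d ^ (c - j) / Δ ^ (c + f - j) / u ^ j := by
  rw [principalPart, mul_sum]
  refine sum_nbij' (c - ·) (c - ·) ?_ ?_ ?_ ?_ fun m hm => ?_
  iterate 4 simp only [mem_range, mem_Icc]; lia
  obtain ⟨j, rfl⟩ := Nat.exists_eq_add_of_le' (mem_range.mp hm).le
  have sign : (-1 : K) ^ (j + m) * (-1) ^ j = (-1) ^ m := by
    rw [pow_add, mul_right_comm, ← mul_pow, neg_one_mul, neg_neg, one_pow, one_mul]
  simp only [Nat.add_sub_cancel, Nat.add_sub_cancel_left, show j + m + f - j = f + m by lia,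
    choose_sub_one_eq_multichoose hf, ← sign]
  ring

/-- The coefficient `K(i)` of the quasi-shuffle formula at `i = z`: the partial fraction expansion
of `1 / ((a z + b) ^ c * (d z + e) ^ f)`, for `a e ≠ d b`. -/
def shuffleKernel (a b d e : K) (c f : ℕ) (z : K) : K :=
  (-1) ^ c * (∑ j ∈ Icc 1 c, (-1) ^ j * ((c + f - j - 1).choose (f - 1) : K) *
      a ^ f * d ^ (c - j) / (a * e - d * b) ^ (c + f - j) / (a * z + b) ^ j) +
    (-1) ^ f * (∑ j ∈ Icc 1 f, (-1) ^ j * ((c + f - j - 1).choose (c - 1) : K) *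
      a ^ (f - j) * d ^ c / (d * b - a * e) ^ (c + f - j) / (d * z + e) ^ j)

lemma shuffleKernel_eq_principalPart_add (a b d e z : K) {c f : ℕ} (hc : 0 < c) (hf : 0 < f) :
    shuffleKernel a b d e c f z =
      principalPart (a / (a * e - d * b)) (d / (a * e - d * b)) (a * z + b)⁻¹ c f +
        principalPart (-(d / (a * e - d * b))) (-(a / (a * e - d * b))) (d * z + e)⁻¹ f c := by
  rw [← div_neg, ← div_neg, neg_sub, principalPart_div_inv _ _ _ _ _ hf,
    principalPart_div_inv _ _ _ _ _ hc, shuffleKernel]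
  simp only [add_comm f c, mul_right_comm _ (d ^ c)]

lemma inv_mul_inv_eq_sub {a d u v Δ : K} (hΔ : Δ ≠ 0) (hu : u ≠ 0) (hv : v ≠ 0)
    (h : a * v - d * u = Δ) : u⁻¹ * v⁻¹ = a / Δ * u⁻¹ - d / Δ * v⁻¹ := by
  field_simp
  linear_combination -h

theorem one_div_pow_mul_pow_eq_shuffleKernel {a b d e z : K} {c f : ℕ} (hc : 0 < c) (hf : 0 < f)
    (hne : a * e ≠ d * b) (hu : a * z + b ≠ 0) (hv : d * z + e ≠ 0) :
    1 / ((a * z + b) ^ c * (d * z + e) ^ f) = shuffleKernel a b d e c f z := by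
  have inv_mul_inv := inv_mul_inv_eq_sub (sub_ne_zero.mpr hne) hu hv
    (show a * (d * z + e) - d * (a * z + b) = a * e - d * b by ring)
  rw [shuffleKernel_eq_principalPart_add a b d e z hc hf,
    ← pow_mul_pow_eq_principalPart_add inv_mul_inv (by lia), one_div, mul_inv, inv_pow, inv_pow]

lemma one_div_pow_mul_pow_of_mul_eq {a d u v : K} (c f : ℕ) (hd : d ≠ 0) (hu : u ≠ 0)
    (hv : v ≠ 0) (huv : a * v = d * u) :
    1 / (u ^ c * v ^ f) = (a / d) ^ f / u ^ (c + f) := by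
  have ratio : a / d = u / v := by
    rw [div_eq_div_iff hd hv, huv, mul_comm]
  rw [ratio, div_pow, pow_add]
  field_simp

end PartialFractions

section QuasiShuffle

lemma sum_Icc_mul_sum_Icc {R : Type*} [CommRing R] (g h : ℕ → R) (n : ℕ) :
    (∑ i ∈ Icc 1 n, g i) * (∑ i ∈ Icc 1 n, h i) =
      (∑ i ∈ Icc 1 n, g i * ∑ k ∈ Icc 1 i, h k) + (∑ i ∈ Icc 1 n, h i * ∑ k ∈ Icc 1 i, g k)
        - ∑ i ∈ Icc 1 n, g i * h i := by
  induction n with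
  | zero => simp
  | succ n ih =>
    simp only [sum_Icc_succ_top (Nat.le_add_left 1 n)]
    linear_combination ih

variable {K : Type*} [Field K]

/-- The outermost summation of a cyclotomic S-sum, with parameters in any field and an
arbitrary function `g` in place of the inner S-sum. -/
def cycSum (a b : K) (c : ℕ) (x : K) (g : ℕ → K) (n : ℕ) : K :=
  ∑ i ∈ Icc 1 n, x ^ i / (a * i + b) ^ c * g i

lemma cycS_cons (a : ℕ) (b : ℤ) (c : ℕ) (x : ℝ) (t : List ((ℕ × ℤ × ℕ) × ℝ)) (n : ℕ) :
    cycS (((a, b, c), x) :: t) n = cycSum (a : ℝ) (b : ℝ) c x (cycS t) n :=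
  rfl

lemma cycSum_mul_cycSum {a b d e : K} {c f n : ℕ} (x y : K) (g h : ℕ → K) {k : ℕ → K}
    (hk : ∀ i ∈ Icc 1 n, 1 / ((a * i + b) ^ c * (d * i + e) ^ f) = k i) :
    cycSum a b c x g n * cycSum d e f y h n =
      (∑ i ∈ Icc 1 n, x ^ i / (a * i + b) ^ c * g i * cycSum d e f y h i)
      + (∑ i ∈ Icc 1 n, y ^ i / (d * i + e) ^ f * cycSum a b c x g i * h i)
      - ∑ i ∈ Icc 1 n, (x * y) ^ i * k i * g i * h i := by
  simp only [cycSum]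
  rw [sum_Icc_mul_sum_Icc]
  congr 1
  · congr 1
    exact sum_congr rfl fun i _ => mul_right_comm _ _ _
  · refine sum_congr rfl fun i hi => ?_
    rw [← hk i hi]
    ring

theorem cycS_quasi_shuffle_general {a b d e : K} {c f n : ℕ} (x y : K) (g h : ℕ → K)
    (hd : d ≠ 0) (hc : 0 < c) (hf : 0 < f)
    (hu : ∀ i ∈ Icc 1 n, a * i + b ≠ 0) (hv : ∀ i ∈ Icc 1 n, d * i + e ≠ 0) :
    (a * e = d * b →
      cycSum a b c x g n * cycSum d e f y h n =
        (∑ i ∈ Icc 1 n, x ^ i / (a * i + b) ^ c * g i * cycSum d e f y h i)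
        + (∑ i ∈ Icc 1 n, y ^ i / (d * i + e) ^ f * cycSum a b c x g i * h i)
        - (a / d) ^ f * ∑ i ∈ Icc 1 n, (x * y) ^ i / (a * i + b) ^ (c + f) * g i * h i) ∧
    (a * e ≠ d * b →
      cycSum a b c x g n * cycSum d e f y h n =
        (∑ i ∈ Icc 1 n, x ^ i / (a * i + b) ^ c * g i * cycSum d e f y h i)
        + (∑ i ∈ Icc 1 n, y ^ i / (d * i + e) ^ f * cycSum a b c x g i * h i)
        - ∑ i ∈ Icc 1 n, (x * y) ^ i * shuffleKernel a b d e c f i * g i * h i) := by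
  refine ⟨fun hΔ => ?_, fun hne => cycSum_mul_cycSum x y g h fun i hi =>
    one_div_pow_mul_pow_eq_shuffleKernel hc hf hne (hu i hi) (hv i hi)⟩
  have proportional (i : ℕ) : a * (d * i + e) = d * (a * i + b) := by linear_combination hΔ
  rw [cycSum_mul_cycSum x y g h fun i hi =>
    one_div_pow_mul_pow_of_mul_eq c f hd (hu i hi) (hv i hi) (proportional i), mul_sum]
  congr 1
  refine sum_congr rfl fun i _ => ?_
  ring

end QuasiShuffle

/-- Quasi-shuffle product formula for cyclotomic S-sums. -/
theorem cycS_quasi_shuffle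
    (a₁ c₁ d₁ f₁ b₁ e₁ : ℕ) (x₁ y₁ : ℝ)
    (t₁ t₂ : List ((ℕ × ℤ × ℕ) × ℝ)) (n : ℕ)
    (ha₁ : 0 < a₁) (hc₁ : 0 < c₁) (hd₁ : 0 < d₁) (hf₁ : 0 < f₁)
    (hx₁ : x₁ ≠ 0) (hy₁ : y₁ ≠ 0)
    (ht₁ : ∀ p ∈ t₁, 0 < p.1.1 ∧ 0 ≤ p.1.2.1 ∧ 0 < p.1.2.2 ∧ p.2 ≠ 0)
    (ht₂ : ∀ p ∈ t₂, 0 < p.1.1 ∧ 0 ≤ p.1.2.1 ∧ 0 < p.1.2.2 ∧ p.2 ≠ 0) :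
    (a₁ * e₁ = d₁ * b₁ →
      cycS (((a₁, (b₁ : ℤ), c₁), x₁) :: t₁) n * cycS (((d₁, (e₁ : ℤ), f₁), y₁) :: t₂) n =
        (∑ i ∈ Finset.Icc 1 n, x₁ ^ i / ((a₁ : ℝ) * i + (b₁ : ℝ)) ^ c₁ *
            cycS t₁ i * cycS (((d₁, (e₁ : ℤ), f₁), y₁) :: t₂) i)
        + (∑ i ∈ Finset.Icc 1 n, y₁ ^ i / ((d₁ : ℝ) * i + (e₁ : ℝ)) ^ f₁ *
            cycS (((a₁, (b₁ : ℤ), c₁), x₁) :: t₁) i * cycS t₂ i)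
        - ((a₁ : ℝ) / (d₁ : ℝ)) ^ f₁ *
            ∑ i ∈ Finset.Icc 1 n, (x₁ * y₁) ^ i / ((a₁ : ℝ) * i + (b₁ : ℝ)) ^ (c₁ + f₁) *
              cycS t₁ i * cycS t₂ i) ∧
    (a₁ * e₁ ≠ d₁ * b₁ →
      cycS (((a₁, (b₁ : ℤ), c₁), x₁) :: t₁) n * cycS (((d₁, (e₁ : ℤ), f₁), y₁) :: t₂) n =
        (∑ i ∈ Finset.Icc 1 n, x₁ ^ i / ((a₁ : ℝ) * i + (b₁ : ℝ)) ^ c₁ *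
            cycS t₁ i * cycS (((d₁, (e₁ : ℤ), f₁), y₁) :: t₂) i)
        + (∑ i ∈ Finset.Icc 1 n, y₁ ^ i / ((d₁ : ℝ) * i + (e₁ : ℝ)) ^ f₁ *
            cycS (((a₁, (b₁ : ℤ), c₁), x₁) :: t₁) i * cycS t₂ i)
        - ∑ i ∈ Finset.Icc 1 n, (x₁ * y₁) ^ i *
            ((-1 : ℝ) ^ c₁ * (∑ j ∈ Finset.Icc 1 c₁, (-1 : ℝ) ^ j *
                (Nat.choose (c₁ + f₁ - j - 1) (f₁ - 1) : ℝ) *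
                (a₁ : ℝ) ^ f₁ * (d₁ : ℝ) ^ (c₁ - j) /
                ((a₁ : ℝ) * (e₁ : ℝ) - (d₁ : ℝ) * (b₁ : ℝ)) ^ (c₁ + f₁ - j) /
                ((a₁ : ℝ) * i + (b₁ : ℝ)) ^ j)
             + (-1 : ℝ) ^ f₁ * (∑ j ∈ Finset.Icc 1 f₁, (-1 : ℝ) ^ j *
                (Nat.choose (c₁ + f₁ - j - 1) (c₁ - 1) : ℝ) *
                (a₁ : ℝ) ^ (f₁ - j) * (d₁ : ℝ) ^ c₁ /
                ((d₁ : ℝ) * (b₁ : ℝ) - (a₁ : ℝ) * (e₁ : ℝ)) ^ (c₁ + f₁ - j) /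
                ((d₁ : ℝ) * i + (e₁ : ℝ)) ^ j)) *
            cycS t₁ i * cycS t₂ i) := by
  have hcast : a₁ * e₁ = d₁ * b₁ ↔ (a₁ : ℝ) * e₁ = d₁ * b₁ := by norm_cast
  have denom_ne_zero {a : ℕ} (b : ℕ) (ha : 0 < a) : ∀ i ∈ Icc 1 n, (a : ℝ) * i + b ≠ 0 :=
    fun i hi => by
      have : 0 < i := (mem_Icc.mp hi).1
      positivity
  simp only [cycS_cons, Int.cast_natCast, ne_eq, hcast]
  exact cycS_quasi_shuffle_general x₁ y₁ (cycS t₁) (cycS t₂) (Nat.cast_ne_zero.mpr hd₁.ne') hc₁ hf₁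
    (denom_ne_zero b₁ ha₁) (denom_ne_zero e₁ hd₁)
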